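/- Let κ > -1 and ρ > -1 be real and let m, n be nonnegative integers. Set H(t) := (κ+m+1) + ρ - ρ/t and Z(z,w) := Z^{κ,ρ}_{m,n}(z,w). Then at every (z,w) ∈ ℂ² with z ≠ 0 and w ≠ 0, the fractional Zernike function satisfies the eigenvalue equation -(1-zw)² · ∂²Z/∂z∂w - (1-zw)·(m·z·∂Z/∂z - H(zw)·w·∂Z/∂w) + m·H(zw)·zw·Z = m(κ+m+1)·Z, where ∂/∂z and ∂/∂w are complex partial derivatives in the respective variable with the other held fixed. (Substituting w = conj z, this says Z^{κ,ρ}_{m,n}(z, conj z) is an eigenfunction of the perturbed magnetic Laplacian -(1-|z|²)²∂∂̄ - (1-|z|²)(m E - H(|z|²) Ē) + m H(|z|²)|z|² with eigenvalue m(κ+m+1).) -/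

import Mathlib

open Complex Finset

/-- The fractional Zernike function `Z^{κ,ρ}_{m,n}(z,w)`, viewed as a function of two
independent complex variables. -/
noncomputable def fracZernike (κ ρ : ℝ) (m n : ℕ) (z w : ℂ) : ℂ :=
  ∑ j ∈ Finset.range (m + 1),
    ((-1 : ℂ) ^ j * (Nat.factorial m : ℂ) * Complex.Gamma ((n : ℂ) + ρ + 1) *
        Complex.Gamma ((κ : ℂ) + m + 1) /
      ((Nat.factorial j : ℂ) * (Nat.factorial (m - j) : ℂ) *
        Complex.Gamma ((n : ℂ) + ρ - j + 1) * Complex.Gamma ((κ : ℂ) + j + 1))) *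
    (1 - z * w) ^ j * z ^ ((n : ℤ) - (j : ℤ)) * w ^ (m - j)


/-- The potential `H(t) = (κ+m+1) + ρ - ρ/t`. -/
noncomputable def Hpot (κ ρ : ℝ) (m : ℕ) (t : ℂ) : ℂ := ((κ : ℂ) + m + 1) + ρ - (ρ : ℂ) / t

/-- The monomials `z^n w^m ((1-zw)/(zw))^j`. -/
noncomputable def uZ (n m j : ℕ) (z w : ℂ) : ℂ :=
  z ^ n * w ^ m * ((1 - z * w) / (z * w)) ^ j

/-- The coefficients. -/
noncomputable def cZ (κ ρ : ℝ) (m n j : ℕ) : ℂ :=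
  ((-1 : ℂ) ^ j * (Nat.factorial m : ℂ) * Complex.Gamma ((n : ℂ) + ρ + 1) *
        Complex.Gamma ((κ : ℂ) + m + 1) /
      ((Nat.factorial j : ℂ) * (Nat.factorial (m - j) : ℂ) *
        Complex.Gamma ((n : ℂ) + ρ - j + 1) * Complex.Gamma ((κ : ℂ) + j + 1)))

lemma fracZernike_eq (κ ρ : ℝ) (m n : ℕ) (z w : ℂ) (hz : z ≠ 0) (hw : w ≠ 0) :
    fracZernike κ ρ m n z w = ∑ j ∈ Finset.range (m + 1), cZ κ ρ m n j * uZ n m j z w := by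
  unfold fracZernike
  refine Finset.sum_congr rfl fun j hj => ?_
  have hj' : j ≤ m := by simpa [Nat.lt_succ_iff] using hj
  obtain ⟨k, rfl⟩ := Nat.exists_eq_add_of_le hj'
  rw [← cZ, uZ, zpow_sub₀ hz, zpow_natCast, zpow_natCast, Nat.add_sub_cancel_left, div_pow,
    mul_pow, pow_add]
  field_simp

lemma uZ_swap (n m j : ℕ) (z w : ℂ) : uZ n m j z w = uZ m n j w z := by
  unfold uZ
  rw [mul_comm z w, mul_comm (z ^ n)]

/-- Derivative in the second variable, times `w`. -/
noncomputable def dZ (n m j : ℕ) (z w : ℂ) : ℂ :=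
  ((m : ℂ) - j) * uZ n m j z w - j * uZ n m (j - 1) z w

lemma uZ_deriv_w (n m j : ℕ) (z w : ℂ) (hz : z ≠ 0) (hw : w ≠ 0) :
    HasDerivAt (fun w' => uZ n m j z w') (dZ n m j z w / w) w := by
  have hzw : z * w ≠ 0 := mul_ne_zero hz hw
  have h1 : HasDerivAt (fun w' : ℂ => z * w') z w := by
    simpa using (hasDerivAt_id w).const_mul z
  have h2 := ((h1.const_sub 1).div h1 hzw).pow j
  have h3 := ((hasDerivAt_pow m w).const_mul (z ^ n)).mul h2
  refine h3.congr_deriv ?_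
  simp only [dZ, uZ, Pi.pow_apply, Pi.div_apply]
  generalize hr : (1 - z * w) / (z * w) = r
  have e1 : (-z * (z * w) - (1 - z * w) * z) / (z * w) ^ 2 = -(r + 1) / w := by
    rw [← hr]; field_simp; ring
  rw [e1]
  rcases m with _ | m <;> rcases j with _ | j <;>
    simp only [Nat.add_sub_cancel, pow_succ, Nat.cast_zero, Nat.cast_add, Nat.cast_one] <;>
    field_simp <;> ring

lemma uZ_deriv_z (n m j : ℕ) (z w : ℂ) (hz : z ≠ 0) (hw : w ≠ 0) :
    HasDerivAt (fun z' => uZ n m j z' w)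
      ((((n : ℂ) - j) * uZ n m j z w - j * uZ n m (j - 1) z w) / z) z := by
  have h := uZ_deriv_w m n j w z hw hz
  simp only [dZ] at h
  simpa only [uZ_swap n m] using h

lemma cZ_rec (κ ρ : ℝ) (m n j : ℕ) (hj : j < m) :
    cZ κ ρ m n (j + 1) * ((j + 1) * (κ + j + 1)) = -cZ κ ρ m n j * ((m - j) * (n + ρ - j)) := by
  obtain ⟨k, rfl⟩ := Nat.exists_eq_add_of_lt hj
  have g1 := Complex.one_div_Gamma_eq_self_mul_one_div_Gamma_add_one ((κ : ℂ) + j + 1)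
  have g2 := Complex.one_div_Gamma_eq_self_mul_one_div_Gamma_add_one ((n : ℂ) + ρ - j)
  have f1 : (Nat.factorial j : ℂ) ≠ 0 := by exact_mod_cast Nat.factorial_ne_zero j
  have f2 : (Nat.factorial k : ℂ) ≠ 0 := by exact_mod_cast Nat.factorial_ne_zero k
  have f3 : (j : ℂ) + 1 ≠ 0 := by exact_mod_cast Nat.succ_ne_zero j
  have f4 : (k : ℂ) + 1 ≠ 0 := by exact_mod_cast Nat.succ_ne_zero k
  unfold cZ
  have e1 : j + k + 1 - (j + 1) = k := by omega
  have e2 : j + k + 1 - j = k + 1 := by omega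
  have e3 : (n : ℂ) + ρ - ((j + 1 : ℕ) : ℂ) + 1 = n + ρ - j := by push_cast; ring
  have e4 : (κ : ℂ) + ((j + 1 : ℕ) : ℂ) + 1 = κ + j + 1 + 1 := by push_cast; ring
  rw [e1, e2, e3, e4, Nat.factorial_succ j, Nat.factorial_succ k]
  generalize Complex.Gamma ((κ : ℂ) + ((j + k + 1 : ℕ) : ℂ) + 1) = A
  generalize Complex.Gamma ((n : ℂ) + ρ + 1) = B
  simp only [div_eq_mul_inv, mul_inv]
  rw [g1, g2]
  push_cast
  field_simp
  ring

lemma tele (K R M N r P : ℂ) (c : ℕ → ℂ) (m : ℕ)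
    (hc : ∀ j < m, c (j + 1) * ((j + 1) * (K + j + 1)) = -c j * ((M - j) * (N + R - j)))
    (u d e : ℕ → ℂ) (hu : ∀ j, u j = P * r ^ j)
    (hd : ∀ j : ℕ, d j = (M - j) * u j - j * u (j - 1))
    (he : ∀ j : ℕ, e j = (N - j) * u j - j * u (j - 1))
    (k : ℕ) (hk : k ≤ m) :
    ∑ j ∈ Finset.range (k + 1), c j * (-r * ((M - j) * e j - j * e (j - 1)) - M * e j
      + (K + M + 1 - R * r) * d j - M * (K + M + 1 + R) * u j)
      = -c k * ((M - k) * (N + R - k)) * (u (k + 1) + u k) := by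
  induction k with
  | zero => simp [hu, hd, he]; ring
  | succ k ih =>
    rw [Finset.sum_range_succ, ih (by omega), ← hc k (by omega)]
    rcases k with _ | k
    · simp [hu, hd, he]; ring
    · simp only [hu, hd, he, Nat.add_sub_cancel, pow_succ]; push_cast; ring

/-- The fractional Zernike functions are eigenfunctions of the perturbed magnetic Laplacian
`-(1-zw)² ∂²/∂z∂w - (1-zw)(m E - H(zw) Ē) + m H(zw) zw` with eigenvalue `m(κ+m+1)`. -/
theorem fracZernike_eigen (κ ρ : ℝ) (hκ : -1 < κ) (hρ : -1 < ρ) (m n : ℕ) (z w : ℂ)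
    (hz : z ≠ 0) (hw : w ≠ 0) :
    -(1 - z * w) ^ 2 * deriv (fun z' => deriv (fun w' => fracZernike κ ρ m n z' w') w) z
      - (1 - z * w) *
          ((m : ℂ) * z * deriv (fun z' => fracZernike κ ρ m n z' w) z
            - Hpot κ ρ m (z * w) * w * deriv (fun w' => fracZernike κ ρ m n z w') w)
      + (m : ℂ) * Hpot κ ρ m (z * w) * (z * w) * fracZernike κ ρ m n z w
    = (m : ℂ) * ((κ : ℂ) + m + 1) * fracZernike κ ρ m n z w := by
  have hzw : z * w ≠ 0 := mul_ne_zero hz hw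
  have hnz : ∀ᶠ z' in nhds z, z' ≠ 0 := isOpen_ne.mem_nhds hz
  have hnw : ∀ᶠ w' in nhds w, w' ≠ 0 := isOpen_ne.mem_nhds hw
  have Dw : ∀ z' : ℂ, z' ≠ 0 → deriv (fun w' => fracZernike κ ρ m n z' w') w
      = ∑ j ∈ Finset.range (m + 1), cZ κ ρ m n j * (dZ n m j z' w / w) := by
    intro z' hz'
    have h : HasDerivAt (fun w' => ∑ j ∈ Finset.range (m + 1), cZ κ ρ m n j * uZ n m j z' w')
        (∑ j ∈ Finset.range (m + 1), cZ κ ρ m n j * (dZ n m j z' w / w)) w :=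
      HasDerivAt.fun_sum fun j _ => (uZ_deriv_w n m j z' w hz' hw).const_mul _
    refine (h.congr_of_eventuallyEq ?_).deriv
    filter_upwards [hnw] with w' hw'
    exact fracZernike_eq κ ρ m n z' w' hz' hw'
  let e : ℕ → ℂ := fun j => ((n : ℂ) - j) * uZ n m j z w - j * uZ n m (j - 1) z w
  have Dz : deriv (fun z' => fracZernike κ ρ m n z' w) z
      = ∑ j ∈ Finset.range (m + 1), cZ κ ρ m n j * (e j / z) := by
    have h : HasDerivAt (fun z' => ∑ j ∈ Finset.range (m + 1), cZ κ ρ m n j * uZ n m j z' w)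
        (∑ j ∈ Finset.range (m + 1), cZ κ ρ m n j * (e j / z)) z :=
      HasDerivAt.fun_sum fun j _ => (uZ_deriv_z n m j z w hz hw).const_mul _
    refine (h.congr_of_eventuallyEq ?_).deriv
    filter_upwards [hnz] with z' hz'
    exact fracZernike_eq κ ρ m n z' w hz' hw
  have Dzw : deriv (fun z' => deriv (fun w' => fracZernike κ ρ m n z' w') w) z
      = ∑ j ∈ Finset.range (m + 1), cZ κ ρ m n j *
        ((((m : ℂ) - j) * (e j / z) - j * (e (j - 1) / z)) / w) := by
    have h : HasDerivAt (fun z' => ∑ j ∈ Finset.range (m + 1), cZ κ ρ m n j * (dZ n m j z' w / w))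
        (∑ j ∈ Finset.range (m + 1), cZ κ ρ m n j *
        ((((m : ℂ) - j) * (e j / z) - j * (e (j - 1) / z)) / w)) z :=
      HasDerivAt.fun_sum fun j _ => ((((uZ_deriv_z n m j z w hz hw).const_mul _).sub
        ((uZ_deriv_z n m (j - 1) z w hz hw).const_mul _)).div_const w).const_mul _
    refine (h.congr_of_eventuallyEq ?_).deriv
    filter_upwards [hnz] with z' hz'
    exact Dw z' hz'
  have T := tele κ ρ m n ((1 - z * w) / (z * w)) (z ^ n * w ^ m) (cZ κ ρ m n) m
    (fun j hj => cZ_rec κ ρ m n j hj) (fun j => uZ n m j z w) (fun j => dZ n m j z w) e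
    (fun j => rfl) (fun j => rfl) (fun j => rfl) m le_rfl
  rw [sub_self, zero_mul, mul_zero, zero_mul] at T
  rw [Dzw, Dz, Dw z hz, fracZernike_eq κ ρ m n z w hz hw, ← sub_eq_zero,
    ← mul_zero (1 - z * w), ← T]
  simp only [Finset.mul_sum, ← Finset.sum_sub_distrib, ← Finset.sum_add_distrib]
  refine Finset.sum_congr rfl fun j _ => ?_
  generalize e j = e1
  generalize e (j - 1) = e2
  generalize dZ n m j z w = d
  generalize uZ n m j z w = u
  generalize cZ κ ρ m n j = c
  unfold Hpot
  field_simp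
  ring
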